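/- Let (S,T) be modular data on Φ, let j ∈ Φ be a unit (S_{j0} = S_{00}), and let J be the associated permutation of Φ with J0 = j and φ_j : Φ → ℂ the associated phase, so that S_{Ja,b} = φ_j(b) S_{ab} for all a, b. Then: T_{Ja,Ja} · conj(T_{aa}) = conj(φ_j(a)) · T_{jj} · conj(T_{00}) for all a ∈ Φ; (T_{jj} · conj(T_{00}))² = conj(φ_j(j)); and if n is the order of the permutation J, then (T_{jj} · conj(T_{00}))^{2n} = 1, and furthermore (T_{jj} · conj(T_{00}))ⁿ = 1 when n is odd. -/

import Mathlib

open scoped BigOperators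
open Complex

/-- Modular data on a finite set `Φ` with distinguished element `zero`: a unitary symmetric
matrix `S`, a diagonal matrix `T` of finite order, with the `zero`-row of `S` real and
strictly positive, `S² = (ST)³`, and nonnegative-integer fusion coefficients `N a b c` given
by Verlinde's formula. -/
structure ModularData (Φ : Type) [Fintype Φ] [DecidableEq Φ] where
  zero : Φ
  S : Matrix Φ Φ ℂ
  T : Matrix Φ Φ ℂ
  N : Φ → Φ → Φ → ℕ
  S_unitary : S * S.conjTranspose = 1
  S_symm : ∀ a b, S a b = S b a
  T_diag : ∀ a b, a ≠ b → T a b = 0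
  T_order : ∃ m : ℕ, 0 < m ∧ T ^ m = 1
  S_zero_pos : ∀ a, (S zero a).im = 0 ∧ 0 < (S zero a).re
  modular_rel : S ^ 2 = (S * T) ^ 3
  verlinde : ∀ a b c,
    (N a b c : ℂ) = ∑ d, S a d * S b d * (starRingEnd ℂ) (S c d) / S zero d

/-!
Since `S` is invertible, `S² = (ST)³` says `TSTST = S`. As `J` multiplies the rows of `S`, hence by
symmetry also its columns, by phases, `(STS)_{Ja,b} = (STS)_{a,Jb}`. Comparing the entries of
`TSTST = S` at `(Ja, b)` and `(a, Jb)` gives `φ(b) T_{aa} T_{Jb,Jb} = φ(a) T_{bb} T_{Ja,Ja}`, and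
`b = 0`, where `φ(0) = 1`, yields the first relation. Moreover `T` commutes with charge conjugation
`S²`, whose entry at `(J⁻¹0, J0)` is `(S²)_{00} ≠ 0`, so `T` has the same eigenvalue at `J⁻¹0` and
`J0`: this computes the square of `x = T_{jj} / T_{00}`. Finally `T_{Jᵏ0,Jᵏ0} = T_{00} x^(k²)`
along the orbit of `0`, so `x^(n²) = 1` for `n` the order of `J`.
-/

/-- The relation `s² = (st)³` between the images `s`, `t` of the standard generators of the modular
group, in an arbitrary monoid. -/
def IsModularPair {G : Type*} [Monoid G] (s t : G) : Prop :=
  s ^ 2 = (s * t) ^ 3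

namespace IsModularPair

variable {G : Type*} [Monoid G] {s t : G}

theorem mul_mul_mul_mul_eq (h : IsModularPair s t) (hs : IsLeftRegular s) :
    t * (s * t * s) * t = s := by
  refine hs ?_
  calc s * (t * (s * t * s) * t) = (s * t) ^ 3 := by
        simp only [pow_succ, pow_zero, one_mul, mul_assoc]
    _ = s * s := by rw [← h, pow_two]

theorem commute_sq (h : IsModularPair s t) (hs : IsLeftRegular s) : Commute (s ^ 2) t := by
  refine hs ?_
  calc s * (s ^ 2 * t) = s ^ 2 * (s * t) := by simp only [pow_two, mul_assoc]
    _ = s * t * s ^ 2 := by rw [h, ← pow_succ, pow_succ']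
    _ = s * (t * s ^ 2) := mul_assoc _ _ _

theorem isUnit_right (h : IsModularPair s t) (hs : IsUnit s) : IsUnit t := by
  have hst : IsUnit (s * t) := (isUnit_pow_iff three_ne_zero).mp (h ▸ hs.pow 2)
  obtain ⟨u, rfl⟩ := hs
  exact (Units.isUnit_units_mul u t).mp hst

end IsModularPair

theorem diagonal_apply_eq_of_commute {Φ R : Type*} [Fintype Φ] [DecidableEq Φ] [CommRing R]
    [NoZeroDivisors R] {A : Matrix Φ Φ R} {t : Φ → R} {a b : Φ}
    (h : Commute A (Matrix.diagonal t)) (hab : A a b ≠ 0) : t a = t b := by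
  have hentry : (A * Matrix.diagonal t) a b = (Matrix.diagonal t * A) a b := by rw [h.eq]
  rw [Matrix.mul_diagonal, Matrix.diagonal_mul, mul_comm] at hentry
  exact (mul_right_cancel₀ hab hentry).symm

/-- The permutation `J` acts on the rows of `S` by multiplying the `b`-th column by `φ b`. For a
unit of modular data, `J` and `φ` are its permutation and its phase; here `φ` need not have modulus
one and may take values in any ring. -/
def IsPhaseShift {Φ R : Type*} [Mul R] (S : Matrix Φ Φ R) (J : Equiv.Perm Φ) (φ : Φ → R) : Prop :=
  ∀ a b, S (J a) b = φ b * S a b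

namespace IsPhaseShift

variable {Φ R : Type*} [CommRing R] {S : Matrix Φ Φ R} {J : Equiv.Perm Φ} {φ : Φ → R} {a b z : Φ}

theorem apply_right (h : IsPhaseShift S J φ) (hS : S.IsSymm) (a b : Φ) :
    S a (J b) = φ a * S a b := by
  rw [hS.apply, h, hS.apply]

theorem pow (h : IsPhaseShift S J φ) (k : ℕ) : IsPhaseShift S (J ^ k) (φ ^ k) := by
  induction k with
  | zero => intro a b; simp
  | succ k ih =>
    intro a b
    rw [pow_succ', Equiv.Perm.mul_apply, h, ih, pow_succ', Pi.mul_apply, mul_assoc]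

theorem phase_ne_zero (h : IsPhaseShift S J φ) (hab : S a b ≠ 0) : φ b ≠ 0 := by
  intro hb
  have hrow := h (J.symm a) b
  rw [J.apply_symm_apply, hb, zero_mul] at hrow
  exact hab hrow

section NoZeroDivisors

variable [NoZeroDivisors R]

theorem phase_eq_one (h : IsPhaseShift S J φ) (hab : S a b ≠ 0) (hfix : S (J a) b = S a b) :
    φ b = 1 :=
  mul_right_cancel₀ hab (by rw [← h, hfix, one_mul])

theorem phase_pow_orderOf (h : IsPhaseShift S J φ) (hab : S a b ≠ 0) : φ b ^ orderOf J = 1 :=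
  (h.pow (orderOf J)).phase_eq_one hab (by rw [pow_orderOf_eq_one, Equiv.Perm.one_apply])

theorem phase_apply_mul_comm (h : IsPhaseShift S J φ) (hS : S.IsSymm) (hab : S a b ≠ 0) :
    φ (J a) * φ b = φ (J b) * φ a := by
  refine mul_right_cancel₀ hab ?_
  calc φ (J a) * φ b * S a b = S (J b) (J a) := by
        rw [h, h.apply_right hS, hS.apply, mul_assoc]
    _ = S (J a) (J b) := hS.apply _ _
    _ = φ (J b) * φ a * S a b := by rw [h, h.apply_right hS, mul_assoc]

theorem phase_pow_apply (h : IsPhaseShift S J φ) (hS : S.IsSymm) (hz : ∀ a, S z a ≠ 0)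
    (hφz : φ z = 1) (k : ℕ) : φ ((J ^ k) z) = φ (J z) ^ k := by
  induction k with
  | zero => simpa using hφz
  | succ k ih =>
    have hshift := h.phase_apply_mul_comm hS (hz ((J ^ k) z))
    rw [hφz, mul_one] at hshift
    rw [pow_succ', Equiv.Perm.mul_apply, ← hshift, ih, pow_succ']

end NoZeroDivisors

variable [Fintype Φ] [DecidableEq Φ]

theorem mul_diagonal_mul_apply (h : IsPhaseShift S J φ) (hS : S.IsSymm) (d : Φ → R) (a b : Φ) :
    (S * Matrix.diagonal d * S) (J a) b = (S * Matrix.diagonal d * S) a (J b) := by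
  rw [Matrix.mul_apply, Matrix.mul_apply]
  refine Finset.sum_congr rfl fun c _ => ?_
  rw [Matrix.mul_diagonal, Matrix.mul_diagonal, h, h.apply_right hS]
  ring

theorem sq_apply (h : IsPhaseShift S J φ) (hS : S.IsSymm) (a b : Φ) :
    (S ^ 2) (J a) b = (S ^ 2) a (J b) := by
  simpa only [Matrix.diagonal_one, mul_one, ← pow_two] using
    h.mul_diagonal_mul_apply hS (fun _ => 1) a b

variable [NoZeroDivisors R] {t : Φ → R}

theorem phase_mul_diagonal_comm (h : IsPhaseShift S J φ) (hS : S.IsSymm) (hunit : IsUnit S)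
    (hST : IsModularPair S (Matrix.diagonal t)) (hab : S a b ≠ 0) :
    φ b * (t a * t (J b)) = φ a * (t b * t (J a)) := by
  have hentry (c d : Φ) : t c * (S * Matrix.diagonal t * S) c d * t d = S c d := by
    rw [← Matrix.diagonal_mul, ← Matrix.mul_diagonal,
      hST.mul_mul_mul_mul_eq hunit.isRegular.left]
  have hrow := hentry (J a) b
  rw [h.mul_diagonal_mul_apply hS, h] at hrow
  have hcol := hentry a (J b)
  rw [h.apply_right hS] at hcol
  refine mul_right_cancel₀ hab ?_
  linear_combination (t b * t (J a)) * hcol - (t a * t (J b)) * hrow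

theorem diagonal_symm_apply_eq (h : IsPhaseShift S J φ) (hS : S.IsSymm) (hunit : IsUnit S)
    (hST : IsModularPair S (Matrix.diagonal t)) (hzz : (S ^ 2) z z ≠ 0) :
    t (J.symm z) = t (J z) := by
  refine diagonal_apply_eq_of_commute (hST.commute_sq hunit.isRegular.left) ?_
  rwa [← h.sq_apply hS, J.apply_symm_apply]

theorem phase_mul_diagonal_sq (h : IsPhaseShift S J φ) (hS : S.IsSymm) (hunit : IsUnit S)
    (hST : IsModularPair S (Matrix.diagonal t)) (hz : ∀ a, S z a ≠ 0) (hzz : (S ^ 2) z z ≠ 0)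
    (hφz : φ z = 1) : φ (J z) * t (J z) ^ 2 = t z ^ 2 := by
  have hphase := h.phase_apply_mul_comm hS (hz (J.symm z))
  have hdiag := h.phase_mul_diagonal_comm hS hunit hST (hz (J.symm z))
  rw [J.apply_symm_apply, hφz] at hphase hdiag
  rw [h.diagonal_symm_apply_eq hS hunit hST hzz] at hdiag
  linear_combination t z ^ 2 * hphase - φ (J z) * hdiag

end IsPhaseShift

theorem apply_pow_eq_mul_pow_sq {Φ R : Type*} [CommMonoid R] {J : Equiv.Perm Φ} {t u : Φ → R}
    {x : R} {z : Φ} (ht : ∀ a, t (J a) = t a * (u a * x))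
    (hu : ∀ k : ℕ, u ((J ^ k) z) = (x ^ 2) ^ k) (k : ℕ) :
    t ((J ^ k) z) = t z * x ^ (k ^ 2) := by
  induction k with
  | zero => simp
  | succ k ih =>
    rw [pow_succ', Equiv.Perm.mul_apply, ht, hu, ih, mul_assoc, ← pow_mul, ← pow_succ, ← pow_add]
    congr 2
    ring

theorem pow_eq_one_of_odd {G : Type*} [Monoid G] {x : G} {n : ℕ} (hn : Odd n)
    (htwo : x ^ (2 * n) = 1) (hsq : x ^ (n ^ 2) = 1) : x ^ n = 1 := by
  have hgcd : (2 * n).gcd (n ^ 2) = n := by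
    rw [pow_two, Nat.gcd_mul_right, hn.coprime_two_left.gcd_eq_one, one_mul]
  rw [← hgcd]
  exact pow_gcd_eq_one.mpr ⟨htwo, hsq⟩

theorem modularData_unit_T_relations_general {Φ K : Type*} [Fintype Φ] [DecidableEq Φ] [Field K]
    {S T : Matrix Φ Φ K} (hS : S.IsSymm) (hunit : IsUnit S) (hT : T.IsDiag)
    (hST : IsModularPair S T) {z : Φ} (hz : ∀ a, S z a ≠ 0) (hzz : (S ^ 2) z z ≠ 0)
    {J : Equiv.Perm Φ} (hJ : S (J z) z = S z z) {φ : Φ → K} (h : IsPhaseShift S J φ) :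
    (∀ a, T (J a) (J a) * (T a a)⁻¹ = (φ a)⁻¹ * (T (J z) (J z) * (T z z)⁻¹)) ∧
    (T (J z) (J z) * (T z z)⁻¹) ^ 2 = (φ (J z))⁻¹ ∧
    (T (J z) (J z) * (T z z)⁻¹) ^ (2 * orderOf J) = 1 ∧
    (Odd (orderOf J) → (T (J z) (J z) * (T z z)⁻¹) ^ orderOf J = 1) := by
  obtain ⟨t, rfl⟩ : ∃ t, T = Matrix.diagonal t := ⟨T.diag, hT.diagonal_diag.symm⟩
  simp only [Matrix.diagonal_apply_eq]
  have ht (a : Φ) : t a ≠ 0 :=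
    (Pi.isUnit_iff.mp (Matrix.isUnit_diagonal.mp (hST.isUnit_right hunit)) a).ne_zero
  have hφ (a : Φ) : φ a ≠ 0 := h.phase_ne_zero (hz a)
  have hφz : φ z = 1 := h.phase_eq_one (hz z) hJ
  have hratio (a : Φ) : t (J a) * (t a)⁻¹ = (φ a)⁻¹ * (t (J z) * (t z)⁻¹) := by
    have hcomm := h.phase_mul_diagonal_comm hS hunit hST (hz a)
    rw [hφz] at hcomm
    field_simp [ht, hφ]
    linear_combination hcomm
  have hsq : (t (J z) * (t z)⁻¹) ^ 2 = (φ (J z))⁻¹ := by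
    have hmul := h.phase_mul_diagonal_sq hS hunit hST hz hzz hφz
    field_simp [ht, hφ]
    linear_combination hmul
  have htwo : (t (J z) * (t z)⁻¹) ^ (2 * orderOf J) = 1 := by
    rw [pow_mul, hsq, inv_pow, h.phase_pow_orderOf (hz (J z)), inv_one]
  refine ⟨hratio, hsq, htwo, fun hodd => pow_eq_one_of_odd hodd htwo ?_⟩
  have horbit := apply_pow_eq_mul_pow_sq (u := fun a => (φ a)⁻¹) (z := z)
    (fun a => by rw [← hratio, mul_comm, inv_mul_cancel_right₀ (ht a)])
    (fun k => by rw [hsq, h.phase_pow_apply hS hz hφz, inv_pow]) (orderOf J)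
  rw [pow_orderOf_eq_one, Equiv.Perm.one_apply] at horbit
  exact (mul_eq_left₀ (ht z)).mp horbit.symm

namespace ModularData

variable {Φ : Type} [Fintype Φ] [DecidableEq Φ] (M : ModularData Φ)

theorem isSymm_S : M.S.IsSymm :=
  Matrix.IsSymm.ext fun a b => M.S_symm b a

theorem isUnit_S : IsUnit M.S :=
  IsUnit.of_mul_eq_one _ M.S_unitary

theorem isDiag_T : M.T.IsDiag :=
  fun a b hab => M.T_diag a b hab

theorem S_zero_apply_ne_zero (a : Φ) : M.S M.zero a ≠ 0 := by
  intro h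
  have hpos := (M.S_zero_pos a).2
  rw [h] at hpos
  exact lt_irrefl _ hpos

theorem S_sq_zero_zero_ne_zero : (M.S ^ 2) M.zero M.zero ≠ 0 := by
  have hre : 0 < ((M.S ^ 2) M.zero M.zero).re := by
    rw [pow_two, Matrix.mul_apply, Complex.re_sum]
    refine Finset.sum_pos (fun c _ => ?_) ⟨M.zero, Finset.mem_univ _⟩
    obtain ⟨him, hpos⟩ := M.S_zero_pos c
    rw [M.S_symm c, Complex.mul_re, him, mul_zero, sub_zero]
    exact mul_pos hpos hpos
  intro h
  rw [h] at hre
  exact lt_irrefl _ hre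

theorem norm_T_apply_self (a : Φ) : ‖M.T a a‖ = 1 := by
  obtain ⟨m, hm, hT⟩ := M.T_order
  rw [← M.isDiag_T.diagonal_diag, Matrix.diagonal_pow, Matrix.diagonal_eq_one] at hT
  exact Complex.norm_eq_one_of_pow_eq_one (congrFun hT a) hm.ne'

theorem norm_phase {J : Equiv.Perm Φ} {φ : Φ → ℂ} (h : IsPhaseShift M.S J φ) (a : Φ) :
    ‖φ a‖ = 1 :=
  Complex.norm_eq_one_of_pow_eq_one
    (h.phase_pow_orderOf (M.S_zero_apply_ne_zero a)) (orderOf_pos J).ne'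

end ModularData

/-- Let `j` be a unit with associated permutation `J` (with `J 0 = j`) and
phase `φ_j` (so `S_{Ja,b} = φ_j(b) S_{ab}`). Then
`T_{Ja,Ja} conj(T_{aa}) = conj(φ_j(a)) T_{jj} conj(T_{00})`,
`(T_{jj} conj(T_{00}))² = conj(φ_j(j))`, `(T_{jj} conj(T_{00}))^{2n} = 1` where `n` is the
order of `J`, and `(T_{jj} conj(T_{00}))ⁿ = 1` when `n` is odd. -/
theorem modularData_unit_T_relations
    {Φ : Type} [Fintype Φ] [DecidableEq Φ] (M : ModularData Φ)
    (j : Φ) (hj : M.S j M.zero = M.S M.zero M.zero)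
    (J : Equiv.Perm Φ) (hJ0 : J M.zero = j)
    (φ : Φ → ℂ) (hφ : ∀ a b, M.S (J a) b = φ b * M.S a b) :
    (∀ a, M.T (J a) (J a) * (starRingEnd ℂ) (M.T a a) =
      (starRingEnd ℂ) (φ a) * (M.T j j * (starRingEnd ℂ) (M.T M.zero M.zero))) ∧
    (M.T j j * (starRingEnd ℂ) (M.T M.zero M.zero)) ^ 2 = (starRingEnd ℂ) (φ j) ∧
    (M.T j j * (starRingEnd ℂ) (M.T M.zero M.zero)) ^ (2 * orderOf J) = 1 ∧
    (Odd (orderOf J) →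
      (M.T j j * (starRingEnd ℂ) (M.T M.zero M.zero)) ^ (orderOf J) = 1) := by
  subst hJ0
  simp only [← Complex.inv_eq_conj (M.norm_T_apply_self _),
    ← Complex.inv_eq_conj (M.norm_phase hφ _)]
  exact modularData_unit_T_relations_general M.isSymm_S M.isUnit_S M.isDiag_T M.modular_rel
    M.S_zero_apply_ne_zero M.S_sq_zero_zero_ne_zero hj hφ
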